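/- Let N be a positive integer, x ∈ ℝ^N, and ν ∈ ℝ, and set x^I := Im(F_ν^{−1}(F x)). Then (F_ν x^I)_0 = 0, and for every integer t with 1 ≤ t ≤ N − 1, (F_ν x^I)_t = sin(πν)·exp(−iπν)·(F x)_t; in particular |(F_ν x^I)_t| = |sin(πν)|·|(F x)_t| for all t ∈ {1,…,N−1}. -/

import Mathlib

/-!
Put `z = F x` and `y = F_ν⁻¹ z`, so that `F_ν (Im y) = (F_ν y - F_ν ȳ) / 2i` with `F_ν y = z`.
For `t ≠ 0`, conjugating row `-t` (mod `N`) of `F_ν` gives row `t` up to the factor `exp (-2πiν)`,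
which comes from `N - t` standing in for `-t`. Hence
`(F_ν ȳ)_t = exp (-2πiν) * conj (z_{-t}) = exp (-2πiν) * z_t`, because `x` is real, and
`(1 - exp (-2πiν)) / 2i = sin (πν) * exp (-iπν)`. Row `0` is constantly `1`, so there the factor
is `1` and the difference vanishes.
-/

open Matrix

/-- The shifted Fourier matrix `(F_ν)_{t,k} = exp(−2πi t (k+ν)/N)`; `F = Fmat N 0` is the
discrete Fourier matrix. -/
noncomputable def Fmat (N : ℕ) (ν : ℝ) : Matrix (Fin N) (Fin N) ℂ :=
  Matrix.of fun t k =>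
    Complex.exp (((-(2 * Real.pi * ((t : ℕ) : ℝ) * (((k : ℕ) : ℝ) + ν) / (N : ℝ))) : ℝ)
      * Complex.I)

/-- `F_ν^{-1} (F x)` where `F_ν^{-1} = (1/N) F_ν^*`. -/
noncomputable def gridTransform (N : ℕ) (ν : ℝ) (x : Fin N → ℝ) : Fin N → ℂ :=
  (((N : ℂ))⁻¹ • (Fmat N ν)ᴴ) *ᵥ ((Fmat N 0) *ᵥ fun k => ((x k : ℝ) : ℂ))

section

open Complex ComplexConjugate

theorem one_sub_exp_neg_two_mul_mul_I (θ : ℂ) :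
    1 - exp (-(2 * θ * I)) = 2 * I * (sin θ * exp (-θ * I)) := by
  have hinv : exp (θ * I) * exp (-θ * I) = 1 := by rw [← exp_add]; simp
  have hsq : exp (-(2 * θ * I)) = exp (-θ * I) * exp (-θ * I) := by
    rw [← exp_add]; ring_nf
  rw [hsq, sin, ← hinv]
  linear_combination (exp (θ * I) - exp (-θ * I)) * exp (-θ * I) * I_sq

theorem mulVec_ofReal_im {m n : Type*} [Fintype n] (A : Matrix m n ℂ) (y : n → ℂ) :
    (A *ᵥ fun k => ((y k).im : ℂ)) = (2 * I)⁻¹ • (A *ᵥ y - A *ᵥ star y) := by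
  have him : (fun k => ((y k).im : ℂ)) = (2 * I)⁻¹ • (y - star y) := by
    ext k
    simp [im_eq_sub_conj, div_eq_inv_mul]
  rw [him, mulVec_smul, mulVec_sub]

theorem sum_range_zpow_pow_eq_ite {K : Type*} [Field K] {ζ : K} {N : ℕ}
    (hζ : IsPrimitiveRoot ζ N) (m : ℤ) :
    ∑ k ∈ Finset.range N, (ζ ^ m) ^ k = if (N : ℤ) ∣ m then (N : K) else 0 := by
  split_ifs with hm
  · simp [(hζ.zpow_eq_one_iff_dvd m).2 hm]
  · have hne : ζ ^ m ≠ 1 := mt (hζ.zpow_eq_one_iff_dvd m).1 hm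
    have hpow : (ζ ^ m) ^ N = 1 := by
      rw [← zpow_natCast, zpow_comm, zpow_natCast, hζ.pow_eq_one, _root_.one_zpow]
    rw [geom_sum_eq hne, hpow, sub_self, zero_div]

theorem natCast_dvd_val_sub_val_iff {N : ℕ} {s t : Fin N} :
    (N : ℤ) ∣ (s : ℤ) - (t : ℤ) ↔ t = s := by
  rw [← Nat.modEq_iff_dvd, Fin.ext_iff]
  exact ⟨fun h => h.eq_of_lt_of_lt t.isLt s.isLt, fun h => h ▸ rfl⟩

theorem conj_Fmat_apply (N : ℕ) (ν : ℝ) (t k : Fin N) :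
    conj (Fmat N ν t k) = exp (2 * Real.pi * t * (k + ν) / N * I) := by
  rw [Fmat, of_apply, ← exp_conj, map_mul, conj_ofReal, conj_I]
  push_cast
  ring_nf

theorem Fmat_apply_mul_conj (N : ℕ) (ν : ℝ) (t s k : Fin N) :
    Fmat N ν t k * conj (Fmat N ν s k) =
      exp (2 * Real.pi * I * (s - t) * ν / N) *
        (exp (2 * Real.pi * I / N) ^ ((s : ℤ) - (t : ℤ))) ^ (k : ℕ) := by
  rw [conj_Fmat_apply, Fmat, of_apply, ← exp_int_mul, ← exp_nat_mul, ← exp_add, ← exp_add]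
  push_cast
  ring_nf

theorem Fmat_mul_conjTranspose (N : ℕ) (ν : ℝ) :
    Fmat N ν * (Fmat N ν)ᴴ = (N : ℂ) • (1 : Matrix (Fin N) (Fin N) ℂ) := by
  ext t s
  have hζ := isPrimitiveRoot_exp N t.pos.ne'
  simp only [mul_apply, conjTranspose_apply, star_def, Fmat_apply_mul_conj, ← Finset.mul_sum]
  rw [Fin.sum_univ_eq_sum_range (fun k => (_ : ℂ) ^ k), sum_range_zpow_pow_eq_ite hζ]
  simp only [natCast_dvd_val_sub_val_iff]
  rcases eq_or_ne t s with rfl | hts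
  · simp
  · simp [hts]

theorem Fmat_mulVec_gridTransform (N : ℕ) (ν : ℝ) (x : Fin N → ℝ) :
    Fmat N ν *ᵥ gridTransform N ν x = Fmat N 0 *ᵥ fun k => (x k : ℂ) := by
  ext t
  have hN : (N : ℂ) ≠ 0 := Nat.cast_ne_zero.2 t.pos.ne'
  rw [gridTransform, mulVec_mulVec, Matrix.mul_smul, Fmat_mul_conjTranspose, inv_smul_smul₀ hN,
    one_mulVec]

section Reflection

variable {N : ℕ} [NeZero N] (ν : ℝ)

theorem Fmat_row_zero_apply (k : Fin N) : Fmat N ν 0 k = 1 := by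
  simp [Fmat]

theorem Fmat_apply_eq_exp_mul_conj_neg {t : Fin N} (ht : t ≠ 0) (k : Fin N) :
    Fmat N ν t k = exp (-(2 * (Real.pi * ν) * I)) * conj (Fmat N ν (-t) k) := by
  have hN : (N : ℂ) ≠ 0 := NeZero.ne _
  have hneg : (((-t : Fin N) : ℕ) : ℂ) = N - (t : ℕ) := by
    rw [Fin.val_neg, if_neg ht, Nat.cast_sub t.isLt.le]
  rw [conj_Fmat_apply, hneg, Fmat, of_apply, ← exp_add, exp_eq_exp_iff_exists_int]
  refine ⟨-(k : ℤ), ?_⟩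
  push_cast
  field_simp
  ring

theorem Fmat_mulVec_star_apply_zero (y : Fin N → ℂ) :
    (Fmat N ν *ᵥ star y) 0 = conj ((Fmat N ν *ᵥ y) 0) := by
  simp [mulVec, dotProduct, Fmat_row_zero_apply]

theorem Fmat_mulVec_star_apply_of_ne_zero {t : Fin N} (ht : t ≠ 0) (y : Fin N → ℂ) :
    (Fmat N ν *ᵥ star y) t =
      exp (-(2 * (Real.pi * ν) * I)) * conj ((Fmat N ν *ᵥ y) (-t)) := by
  simp only [mulVec, dotProduct, map_sum, map_mul, Finset.mul_sum, Pi.star_apply, star_def,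
    Fmat_apply_eq_exp_mul_conj_neg ν ht, mul_assoc]

theorem conj_Fmat_zero_mulVec_ofReal_neg (x : Fin N → ℝ) (t : Fin N) :
    conj ((Fmat N 0 *ᵥ fun k => (x k : ℂ)) (-t)) = (Fmat N 0 *ᵥ fun k => (x k : ℂ)) t := by
  have hx : star (fun k => (x k : ℂ)) = fun k => (x k : ℂ) := by ext k; simp
  rcases eq_or_ne t 0 with rfl | ht
  · rw [neg_zero, ← Fmat_mulVec_star_apply_zero, hx]
  · simpa [hx] using (Fmat_mulVec_star_apply_of_ne_zero 0 ht fun k => (x k : ℂ)).symm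

theorem Fmat_mulVec_gridTransform_im_apply_zero (x : Fin N → ℝ) :
    (Fmat N ν *ᵥ fun n => ((gridTransform N ν x n).im : ℂ)) 0 = 0 := by
  have hreal := conj_Fmat_zero_mulVec_ofReal_neg x 0
  rw [neg_zero] at hreal
  rw [mulVec_ofReal_im, Pi.smul_apply, Pi.sub_apply, Fmat_mulVec_star_apply_zero,
    Fmat_mulVec_gridTransform, hreal, sub_self, smul_zero]

theorem Fmat_mulVec_gridTransform_im_apply_of_ne_zero {t : Fin N} (ht : t ≠ 0) (x : Fin N → ℝ) :
    (Fmat N ν *ᵥ fun n => ((gridTransform N ν x n).im : ℂ)) t =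
      (Real.sin (Real.pi * ν) : ℂ) * exp ((-(Real.pi * ν) : ℝ) * I) *
        (Fmat N 0 *ᵥ fun k => (x k : ℂ)) t := by
  set z := Fmat N 0 *ᵥ fun k => (x k : ℂ) with hz
  calc
    _ = (2 * I)⁻¹ * (z t - exp (-(2 * (Real.pi * ν) * I)) * conj (z (-t))) := by
      rw [mulVec_ofReal_im, Pi.smul_apply, Pi.sub_apply, Fmat_mulVec_star_apply_of_ne_zero ν ht,
        Fmat_mulVec_gridTransform, smul_eq_mul]
    _ = (2 * I)⁻¹ * ((1 - exp (-(2 * (Real.pi * ν) * I))) * z t) := by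
      rw [hz, conj_Fmat_zero_mulVec_ofReal_neg, one_sub_mul]
    _ = _ := by
      rw [one_sub_exp_neg_two_mul_mul_I, mul_assoc (2 * I), inv_mul_cancel_left₀ (by simp)]
      push_cast
      rfl

end Reflection

end

/-- With `x^I = Im(F_ν^{-1}(F x))`: `(F_ν x^I)_0 = 0`; for `1 ≤ t ≤ N−1`,
`(F_ν x^I)_t = sin(πν) exp(−iπν) (F x)_t`; in particular
`|(F_ν x^I)_t| = |sin(πν)| |(F x)_t|` for those `t`. -/
theorem Fnu_mulVec_im_part (N : ℕ) (hN : 0 < N) (x : Fin N → ℝ) (ν : ℝ) :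
    ((Fmat N ν *ᵥ fun n => (((gridTransform N ν x n).im : ℝ) : ℂ)) ⟨0, hN⟩ = 0) ∧
    (∀ t : Fin N, 1 ≤ (t : ℕ) →
      (Fmat N ν *ᵥ fun n => (((gridTransform N ν x n).im : ℝ) : ℂ)) t
        = ((Real.sin (Real.pi * ν) : ℝ) : ℂ) *
            Complex.exp (((-(Real.pi * ν)) : ℝ) * Complex.I) *
            ((Fmat N 0 *ᵥ fun k => ((x k : ℝ) : ℂ)) t)) ∧
    (∀ t : Fin N, 1 ≤ (t : ℕ) →
      ‖(Fmat N ν *ᵥ fun n => (((gridTransform N ν x n).im : ℝ) : ℂ)) t‖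
        = |Real.sin (Real.pi * ν)| *
            ‖(Fmat N 0 *ᵥ fun k => ((x k : ℝ) : ℂ)) t‖) := by
  have : NeZero N := ⟨hN.ne'⟩
  have ne_zero {t : Fin N} (ht : 1 ≤ (t : ℕ)) : t ≠ 0 :=
    Fin.val_ne_zero_iff.1 (Nat.one_le_iff_ne_zero.1 ht)
  refine ⟨Fmat_mulVec_gridTransform_im_apply_zero ν x,
    fun t ht => Fmat_mulVec_gridTransform_im_apply_of_ne_zero ν (ne_zero ht) x, fun t ht => ?_⟩
  rw [Fmat_mulVec_gridTransform_im_apply_of_ne_zero ν (ne_zero ht) x, norm_mul, norm_mul,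
    Complex.norm_exp_ofReal_mul_I, Complex.norm_real, Real.norm_eq_abs, mul_one]
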